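/- Let N ≥ 1 and σ = 4/N, and set k* = (σ+1)^{1/σ} B(N,σ)^{-1/σ}. Then E_min(m) is finite for every m ∈ (0, k*) and E_min(m) = -∞ for every m ≥ k*. In addition, for any k₁ < k* and any k₂ > 0, the set {u ∈ H²(ℝ^N) : ‖u‖_{L²}² ≤ k₁ and E(u) ≤ k₂} is bounded in H²(ℝ^N). -/

import Mathlib

open MeasureTheory Filter Topology

noncomputable section

abbrev Esp (N : ℕ) := EuclideanSpace ℝ (Fin N)

/-- Smooth compactly supported test functions. -/
def TestFun {N : ℕ} (φ : Esp N → ℂ) : Prop :=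
  ContDiff ℝ (⊤ : ℕ∞) φ ∧ HasCompactSupport φ

/-- Partial derivative in the `i`-th coordinate direction. -/
def pderivC {N : ℕ} (i : Fin N) (φ : Esp N → ℂ) : Esp N → ℂ :=
  fun x => fderiv ℝ φ x (EuclideanSpace.single i (1 : ℝ))

/-- The Laplacian of a (smooth) function. -/
def lapC {N : ℕ} (φ : Esp N → ℂ) : Esp N → ℂ :=
  fun x => ∑ i, pderivC i (pderivC i φ) x

/-- `v` is the weak `i`-th partial derivative of `u`. -/
def IsWeakPDeriv {N : ℕ} (u : Esp N → ℂ) (i : Fin N) (v : Esp N → ℂ) : Prop :=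
  ∀ φ : Esp N → ℂ, TestFun φ → ∫ x, u x * pderivC i φ x = - ∫ x, v x * φ x

/-- `v` is the weak Laplacian of `u`. -/
def IsWeakLap {N : ℕ} (u v : Esp N → ℂ) : Prop :=
  ∀ φ : Esp N → ℂ, TestFun φ → ∫ x, u x * lapC φ x = ∫ x, v x * φ x

/-- An element of the Sobolev space `H²(ℝ^N, ℂ)`: an `L²` function together with its
weak partial derivatives and its weak Laplacian, all in `L²`. -/
structure H2 (N : ℕ) where
  u : Esp N → ℂ
  grad : Fin N → Esp N → ℂ
  lapl : Esp N → ℂ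
  u_mem : MemLp u 2 (volume : Measure (Esp N))
  grad_mem : ∀ i, MemLp (grad i) 2 (volume : Measure (Esp N))
  lapl_mem : MemLp lapl 2 (volume : Measure (Esp N))
  grad_spec : ∀ i, IsWeakPDeriv u i (grad i)
  lapl_spec : IsWeakLap u lapl

namespace H2

variable {N : ℕ}

/-- `∫ |u|²`. -/
def massSq (U : H2 N) : ℝ := ∫ x, ‖U.u x‖ ^ 2

/-- `∫ |∇u|²`. -/
def gradSq (U : H2 N) : ℝ := ∑ i, ∫ x, ‖U.grad i x‖ ^ 2

/-- `∫ |Δu|²`. -/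
def lapSq (U : H2 N) : ℝ := ∫ x, ‖U.lapl x‖ ^ 2

/-- `∫ |u|^{2σ+2}`. -/
def pPow (σ : ℝ) (U : H2 N) : ℝ := ∫ x, ‖U.u x‖ ^ (2 * σ + 2)

/-- The energy `E(u) = ∫|Δu|² - 2∫|∇u|² - (1/(σ+1))∫|u|^{2σ+2}`. -/
def energy (σ : ℝ) (U : H2 N) : ℝ :=
  U.lapSq - 2 * U.gradSq - (1 / (σ + 1)) * U.pPow σ

/-- The square of the `H²` norm. -/
def h2NormSq (U : H2 N) : ℝ := U.massSq + U.gradSq + U.lapSq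

/-- `u` does not vanish almost everywhere. -/
def Nontriv (U : H2 N) : Prop := ¬ (U.u =ᵐ[(volume : Measure (Esp N))] 0)

end H2

/-- `E_min(m) = inf {E(u) : u ∈ H², ∫|u|² = m}`, with values in `EReal`. -/
def EminE (N : ℕ) (σ m : ℝ) : EReal :=
  ⨅ (U : H2 N) (_ : U.massSq = m), ((U.energy σ : ℝ) : EReal)

/-- The `L^p` norm (as a real number) of a function on `ℝ^N`. -/
def rLp {N : ℕ} (p : ℝ) (f : Esp N → ℂ) : ℝ :=
  (eLpNorm f (ENNReal.ofReal p) (volume : Measure (Esp N))).toReal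


/-- The best constant `B(N,σ)` in the Gagliardo–Nirenberg–Sobolev inequality
`‖u‖_{L^{2σ+2}}^{2σ+2} ≤ B ‖Δu‖_{L²}^{Nσ/2} ‖u‖_{L²}^{2+2σ-Nσ/2}`. -/
def GNconst (N : ℕ) (σ : ℝ) : ℝ :=
  sSup {r : ℝ | ∃ U : H2 N, U.Nontriv ∧
    r = U.pPow σ /
      (rLp 2 U.lapl ^ ((N : ℝ) * σ / 2) * rLp 2 U.u ^ (2 + 2 * σ - (N : ℝ) * σ / 2))}

/-- `k* = (σ+1)^{1/σ} B(N,σ)^{-1/σ}`. -/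
def kstar (N : ℕ) (σ : ℝ) : ℝ := (σ + 1) ^ (1 / σ) * GNconst N σ ^ (-(1 / σ))

/-- Strong `H²` convergence of `v k (· + xs k)` to `U`. -/
def H2TendstoTrans {N : ℕ} (v : ℕ → H2 N) (xs : ℕ → Esp N) (U : H2 N) : Prop :=
  Tendsto (fun k => eLpNorm (fun x => (v k).u (x + xs k) - U.u x) 2
      (volume : Measure (Esp N))) atTop (nhds 0) ∧
  (∀ i, Tendsto (fun k => eLpNorm (fun x => (v k).grad i (x + xs k) - U.grad i x) 2
      (volume : Measure (Esp N))) atTop (nhds 0)) ∧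
  Tendsto (fun k => eLpNorm (fun x => (v k).lapl (x + xs k) - U.lapl x) 2
      (volume : Measure (Esp N))) atTop (nhds 0)

/-- `u` is a weak (`H^{-2}`) solution of `Δ²u + 2Δu + (1+c)u - |u|^{2σ}u = 0`. -/
def SolvesSW {N : ℕ} (σ c : ℝ) (U : H2 N) : Prop :=
  ∀ φ : Esp N → ℂ, TestFun φ →
    (∫ x, U.lapl x * lapC φ x) + 2 * (∫ x, U.lapl x * φ x) +
        ((1 + c : ℝ) : ℂ) * (∫ x, U.u x * φ x) -
        (∫ x, ((‖U.u x‖ ^ (2 * σ) : ℝ) : ℂ) * U.u x * φ x) = 0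

/-- `T_c(u) = ∫|Δu|² - 2∫|∇u|² + (1+c)∫|u|²`. -/
def Tfun {N : ℕ} (c : ℝ) (U : H2 N) : ℝ := U.lapSq - 2 * U.gradSq + (1 + c) * U.massSq

/-- `t(c) = inf {T_c(u) : ∫|u|^{2σ+2} = 1}`. -/
def tmin (N : ℕ) (σ c : ℝ) : ℝ := sInf {r : ℝ | ∃ U : H2 N, U.pPow σ = 1 ∧ r = Tfun c U}

/-- The action `S_c(u) = E(u) + (1+c)‖u‖_{L²}² = T_c(u) - (1/(σ+1))∫|u|^{2σ+2}`. -/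
def action {N : ℕ} (σ c : ℝ) (U : H2 N) : ℝ := U.energy σ + (1 + c) * U.massSq

/-!
In frequency variables, the part of `u` below a threshold depending on `t` is at most `t / 2`
pointwise, so Chebyshev's inequality bounds the measure of `{|u| > t}` by the high-frequency mass.
Integrating in `t` gives the Gagliardo–Nirenberg inequality, hence `B(N,σ) < ∞`; splitting at
`|ξ| = 1` gives `∫|u|^{2σ+2} ≤ C (M^σ G + G^σ L)`, with `M`, `G`, `L` the squared `L²` norms of `u`,
`∇u`, `Δu`.

For `σ = 4/N` the potential term of the energy is at most `(M/k*)^σ L`, while `G ≤ √(M L)`, so below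
`k*` the energy is coercive in `L`. For `m ≥ k*` there are `u` of mass `m` with `L = 1` whose
quartic part `L - ∫|u|^{2σ+2}/(σ+1)` is at most any given `ε > 0`. The second inequality keeps `G`
above some `g > 0` independent of `ε`, and the mass-preserving dilation by `l = √(g/ε)` brings the
energy down to at most `ε l⁴ - 2 g l² = -g²/ε`.
-/

open scoped SchwartzMap FourierTransform ENNReal ContDiff

section Fourier

/-! ### The Fourier transform on `L²` -/

variable {V : Type*} [NormedAddCommGroup V] [InnerProductSpace ℝ V] [FiniteDimensional ℝ V]
  [MeasurableSpace V] [BorelSpace V]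

/-- The Hilbert space `L²(V, ℂ)`, on which Mathlib's Fourier transform `𝓕` is unitary. -/
abbrev L2Space (V : Type*) [NormedAddCommGroup V] [InnerProductSpace ℝ V]
    [FiniteDimensional ℝ V] [MeasurableSpace V] [BorelSpace V] :=
  Lp (α := V) ℂ 2 (volume : Measure V)

theorem integral_schwartzMap_mul_fourier (f : L2Space V) (ψ : 𝓢(V, ℂ)) :
    ∫ ξ, ψ ξ * (𝓕 f : L2Space V) ξ = ∫ x, 𝓕 ψ x * f x := by
  have h := congrArg (fun T => T ψ) (Lp.fourier_toTemperedDistribution_eq f)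
  simpa only [TemperedDistribution.fourier_apply, Lp.toTemperedDistribution_apply,
    smul_eq_mul] using h.symm

theorem integral_schwartzMap_mul_fourierInv (f : L2Space V) (ψ : 𝓢(V, ℂ)) :
    ∫ x, ψ x * (𝓕⁻ f : L2Space V) x = ∫ ξ, 𝓕⁻ ψ ξ * f ξ := by
  have h := congrArg (fun T => T ψ) (Lp.fourierInv_toTemperedDistribution_eq f)
  simpa only [TemperedDistribution.fourierInv_apply, Lp.toTemperedDistribution_apply,
    smul_eq_mul] using h.symm

theorem ae_eq_of_integral_schwartzMap_mul_eq {f g : V → ℂ} (hf : LocallyIntegrable f)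
    (hg : LocallyIntegrable g) (h : ∀ ψ : 𝓢(V, ℂ), ∫ x, ψ x * f x = ∫ x, ψ x * g x) :
    f =ᵐ[volume] g := by
  refine ae_eq_of_integral_contDiff_smul_eq hf hg fun k k_smooth k_cpt => ?_
  have hk : HasCompactSupport (Complex.ofRealCLM ∘ k) := k_cpt.comp_left rfl
  have hk' : ContDiff ℝ ∞ (Complex.ofRealCLM ∘ k) := Complex.ofRealCLM.contDiff.comp k_smooth
  simpa using h (hk.toSchwartzMap hk')

theorem lintegral_enorm_sq_eq_enorm_sq {α : Type*} [MeasurableSpace α] {μ : Measure α}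
    (f : Lp ℂ 2 μ) : ∫⁻ x, ‖f x‖ₑ ^ 2 ∂μ = ‖f‖ₑ ^ 2 := by
  have h := eLpNorm_nnreal_pow_eq_lintegral (f := f) (μ := μ) (p := 2) two_ne_zero
  simpa only [Lp.enorm_def, NNReal.coe_ofNat, ENNReal.coe_ofNat, ENNReal.rpow_ofNat] using h.symm

theorem lintegral_enorm_fourier_sq (f : L2Space V) :
    ∫⁻ ξ, ‖(𝓕 f : L2Space V) ξ‖ₑ ^ 2 = ∫⁻ x, ‖f x‖ₑ ^ 2 := by
  rw [lintegral_enorm_sq_eq_enorm_sq, lintegral_enorm_sq_eq_enorm_sq,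
    enorm_eq_iff_norm_eq.2 (Lp.norm_fourier_eq f)]

theorem lintegral_enorm_fourierInv_sq (f : L2Space V) :
    ∫⁻ x, ‖(𝓕⁻ f : L2Space V) x‖ₑ ^ 2 = ∫⁻ ξ, ‖f ξ‖ₑ ^ 2 := by
  rw [← lintegral_enorm_fourier_sq, FourierTransform.fourier_fourierInv_eq]

theorem coeFn_fourierInv_ae_eq {f : L2Space V} (hf : Integrable f) :
    ⇑(𝓕⁻ f : L2Space V) =ᵐ[volume] 𝓕⁻ (f : V → ℂ) := by
  have hL : Continuous fun p : V × V => (-(innerₗ V)) p.1 p.2 := by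
    simp only [LinearMap.neg_apply, innerₗ_apply_apply]
    fun_prop
  have hcont : Continuous (𝓕⁻ (f : V → ℂ)) :=
    VectorFourier.fourierIntegral_continuous Real.continuous_fourierChar hL hf
  refine ae_eq_of_integral_schwartzMap_mul_eq ((Lp.memLp _).locallyIntegrable (by norm_num))
    hcont.locallyIntegrable fun ψ => ?_
  have hflip : (-(innerₗ V)).flip = -(innerₗ V) := by
    ext x y
    simp [real_inner_comm]
  have h := VectorFourier.integral_fourierIntegral_smul_eq_flip (μ := (volume : Measure V))
    (ν := (volume : Measure V)) (L := -(innerₗ V)) Real.continuous_fourierChar hL ψ.integrable hf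
  simp only [hflip, smul_eq_mul] at h
  rw [integral_schwartzMap_mul_fourierInv, SchwartzMap.fourierInv_coe]
  exact h

theorem ae_enorm_fourierInv_le (f : L2Space V) :
    ∀ᵐ x, ‖(𝓕⁻ f : L2Space V) x‖ₑ ≤ ∫⁻ ξ, ‖f ξ‖ₑ := by
  by_cases hf : Integrable f
  · filter_upwards [coeFn_fourierInv_ae_eq hf] with x hx
    rw [hx, Real.fourierInv_eq]
    refine (enorm_integral_le_lintegral_enorm _).trans_eq (lintegral_congr fun ξ => ?_)
    rw [← ofReal_norm, Circle.norm_smul, ofReal_norm]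
  · have htop : ∫⁻ ξ, ‖f ξ‖ₑ = ⊤ := by
      by_contra h
      exact hf ⟨Lp.aestronglyMeasurable f, lt_top_iff_ne_top.2 h⟩
    simp [htop]

theorem sq_lintegral_mul_le {α : Type*} [MeasurableSpace α] {μ : Measure α} {g h : α → ℝ≥0∞}
    (hg : AEMeasurable g μ) (hh : AEMeasurable h μ) :
    (∫⁻ x, g x * h x ∂μ) ^ 2 ≤ (∫⁻ x, g x ^ 2 ∂μ) * ∫⁻ x, h x ^ 2 ∂μ := by
  have hCS := ENNReal.lintegral_mul_le_Lp_mul_Lq μ Real.HolderConjugate.two_two hg hh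
  calc (∫⁻ x, g x * h x ∂μ) ^ 2
      ≤ ((∫⁻ x, g x ^ (2 : ℝ) ∂μ) ^ (1 / (2 : ℝ)) * (∫⁻ x, h x ^ (2 : ℝ) ∂μ) ^ (1 / (2 : ℝ))) ^ 2 :=
        pow_le_pow_left' hCS 2
    _ = (∫⁻ x, g x ^ 2 ∂μ) * ∫⁻ x, h x ^ 2 ∂μ := by
        simp only [mul_pow, ENNReal.rpow_ofNat, ← ENNReal.rpow_mul_natCast, Nat.cast_ofNat,
          one_div, ne_eq, OfNat.ofNat_ne_zero, not_false_eq_true, inv_mul_cancel₀,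
          ENNReal.rpow_one]

/-- The weak-type to strong-type step of the real interpolation method. -/
theorem lintegral_rpow_add_le_of_meas_lt_le {α β : Type*} [MeasurableSpace α]
    [MeasurableSpace β] {μ : Measure α} {ν : Measure β} {h : α → ℝ} {T : β → ℝ}
    (hh : AEMeasurable h μ) (hh0 : ∀ x, 0 ≤ h x) (hT : AEMeasurable T ν) (hT0 : ∀ y, 0 ≤ T y)
    {p q : ℝ} (hp : 0 < p) (hq : 0 ≤ q)
    (hlevel : ∀ t, 0 < t → μ {x | t < h x} ≤ ENNReal.ofReal (t ^ (-q)) * ν {y | t ≤ T y}) :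
    ∫⁻ x, ENNReal.ofReal (h x ^ (p + q)) ∂μ ≤
      ENNReal.ofReal ((p + q) / p) * ∫⁻ y, ENNReal.ofReal (T y ^ p) ∂ν := by
  calc ∫⁻ x, ENNReal.ofReal (h x ^ (p + q)) ∂μ
      = ENNReal.ofReal (p + q) *
          ∫⁻ t in Set.Ioi 0, μ {x | t < h x} * ENNReal.ofReal (t ^ (p + q - 1)) :=
        lintegral_rpow_eq_lintegral_meas_lt_mul μ (ae_of_all _ hh0) hh (by positivity)
    _ ≤ ENNReal.ofReal (p + q) *
          ∫⁻ t in Set.Ioi 0, ν {y | t ≤ T y} * ENNReal.ofReal (t ^ (p - 1)) := by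
        gcongr ENNReal.ofReal (p + q) * ?_
        refine setLIntegral_mono' measurableSet_Ioi fun t (ht : 0 < t) => ?_
        have hpow : t ^ (-q) * t ^ (p + q - 1) = t ^ (p - 1) := by
          rw [← Real.rpow_add ht]
          ring_nf
        rw [← hpow, ENNReal.ofReal_mul (by positivity), ← mul_assoc, mul_comm (ν _)]
        gcongr
        exact hlevel t ht
    _ = ENNReal.ofReal ((p + q) / p) * ∫⁻ y, ENNReal.ofReal (T y ^ p) ∂ν := by
        rw [lintegral_rpow_eq_lintegral_meas_le_mul ν (ae_of_all _ hT0) hT hp, ← mul_assoc,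
          ← ENNReal.ofReal_mul (by positivity), div_mul_cancel₀ _ hp.ne']

/-! ### Gagliardo–Nirenberg inequalities for frequency moments -/

/-- The moment `∫ |ξ|ˢ |f(ξ)|² dξ`: for `f = û` this is, up to the constant `(2π)ˢ`, the square of
the homogeneous Sobolev seminorm of `u` of order `s / 2`. -/
def freqMoment (s : ℝ) (f : V → ℂ) : ℝ≥0∞ := ∫⁻ ξ, ‖ξ‖ₑ ^ s * ‖f ξ‖ₑ ^ 2

theorem freqMoment_zero (f : V → ℂ) : freqMoment 0 f = ∫⁻ ξ, ‖f ξ‖ₑ ^ 2 := by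
  simp only [freqMoment, ENNReal.rpow_zero, one_mul]

theorem freqMoment_zero_ne_top (f : L2Space V) : freqMoment 0 f ≠ ⊤ := by
  rw [freqMoment_zero, lintegral_enorm_sq_eq_enorm_sq]
  exact ENNReal.pow_ne_top enorm_ne_top

theorem freqMoment_two_sq_le (f : L2Space V) :
    freqMoment 2 f ^ 2 ≤ freqMoment 4 f * freqMoment 0 f := by
  have hf : AEMeasurable (fun ξ => ‖f ξ‖ₑ) (volume : Measure V) :=
    (Lp.aestronglyMeasurable f).enorm
  calc freqMoment 2 f ^ 2
      = (∫⁻ ξ, (‖ξ‖ₑ ^ (2 : ℝ) * ‖f ξ‖ₑ) * ‖f ξ‖ₑ) ^ 2 := by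
        simp only [freqMoment, sq ‖f _‖ₑ, mul_assoc]
    _ ≤ (∫⁻ ξ, (‖ξ‖ₑ ^ (2 : ℝ) * ‖f ξ‖ₑ) ^ 2) * ∫⁻ ξ, ‖f ξ‖ₑ ^ 2 :=
        sq_lintegral_mul_le ((by fun_prop : AEMeasurable _ _).mul hf) hf
    _ = freqMoment 4 f * freqMoment 0 f := by
        rw [freqMoment_zero, freqMoment]
        congr 2 with ξ
        rw [mul_pow, ← ENNReal.rpow_mul_natCast]
        norm_num

/-- Sharp restriction of the frequency profile `f` to the set `S`. -/
def freqCut (f : L2Space V) {S : Set V} (hS : MeasurableSet S) : L2Space V :=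
  ((Lp.memLp f).indicator hS).toLp (S.indicator f)

variable {S : Set V}

theorem coeFn_freqCut (f : L2Space V) (hS : MeasurableSet S) :
    ⇑(freqCut f hS) =ᵐ[volume] S.indicator f :=
  MemLp.coeFn_toLp _

theorem freqCut_add_freqCut_compl (f : L2Space V) (hS : MeasurableSet S) :
    freqCut f hS + freqCut f hS.compl = f := by
  refine Lp.ext ?_
  filter_upwards [coeFn_freqCut f hS, coeFn_freqCut f hS.compl,
    Lp.coeFn_add (freqCut f hS) (freqCut f hS.compl)] with x h₁ h₂ hadd
  rw [hadd, Pi.add_apply, h₁, h₂]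
  exact congrFun (Set.indicator_self_add_compl S f) x

theorem fourierInv_ae_eq_freqCut_add (f : L2Space V) (hS : MeasurableSet S) :
    ∀ᵐ x, (𝓕⁻ f : L2Space V) x =
      (𝓕⁻ (freqCut f hS) : L2Space V) x + (𝓕⁻ (freqCut f hS.compl) : L2Space V) x := by
  filter_upwards [Lp.coeFn_add (𝓕⁻ (freqCut f hS) : L2Space V) (𝓕⁻ (freqCut f hS.compl))]
    with x hx
  rw [← Pi.add_apply, ← hx, ← FourierTransform.fourierInv_add, freqCut_add_freqCut_compl]

theorem lintegral_freqCut (f : L2Space V) (hS : MeasurableSet S) {F : V → ℂ → ℝ≥0∞}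
    (hF : ∀ ξ, F ξ 0 = 0) : ∫⁻ ξ, F ξ (freqCut f hS ξ) = ∫⁻ ξ in S, F ξ (f ξ) := by
  rw [← lintegral_indicator hS]
  refine lintegral_congr_ae ?_
  filter_upwards [coeFn_freqCut f hS] with ξ hξ
  by_cases hmem : ξ ∈ S <;> simp [hξ, hmem, hF]

theorem freqMoment_freqCut (s : ℝ) (f : L2Space V) (hS : MeasurableSet S) :
    freqMoment s (freqCut f hS) = ∫⁻ ξ in S, ‖ξ‖ₑ ^ s * ‖f ξ‖ₑ ^ 2 :=
  lintegral_freqCut f hS (F := fun ξ z => ‖ξ‖ₑ ^ s * ‖z‖ₑ ^ 2) (by simp)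

theorem sq_lintegral_enorm_freqCut_le (f : L2Space V) (hS : MeasurableSet S) :
    (∫⁻ ξ, ‖freqCut f hS ξ‖ₑ) ^ 2 ≤ volume S * freqMoment 0 f := by
  rw [lintegral_freqCut f hS (F := fun _ z => ‖z‖ₑ) (by simp)]
  have hCS := sq_lintegral_mul_le (μ := volume.restrict S) (g := fun _ => 1)
    (h := fun ξ => ‖f ξ‖ₑ) aemeasurable_const (Lp.aestronglyMeasurable f).enorm.restrict
  simp only [one_mul, one_pow, lintegral_one, Measure.restrict_apply_univ] at hCS
  refine hCS.trans ?_
  rw [freqMoment_zero]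
  gcongr
  exact Measure.restrict_le_self

theorem volume_lt_norm_fourierInv_le (f : L2Space V) (hS : MeasurableSet S) {t : ℝ}
    (ht : 0 < t) (hvol : volume S * freqMoment 0 f ≤ ENNReal.ofReal (t / 2) ^ 2) :
    volume {x | t < ‖(𝓕⁻ f : L2Space V) x‖} ≤
      (∫⁻ ξ in Sᶜ, ‖f ξ‖ₑ ^ 2) / ENNReal.ofReal (t / 2) ^ 2 := by
  have hlow : ∫⁻ ξ, ‖freqCut f hS ξ‖ₑ ≤ ENNReal.ofReal (t / 2) :=
    (ENNReal.pow_le_pow_left_iff two_ne_zero).1 ((sq_lintegral_enorm_freqCut_le f hS).trans hvol)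
  have hsub : ∀ᵐ x, t < ‖(𝓕⁻ f : L2Space V) x‖ →
      ENNReal.ofReal (t / 2) ^ 2 ≤ ‖(𝓕⁻ (freqCut f hS.compl) : L2Space V) x‖ₑ ^ 2 := by
    filter_upwards [fourierInv_ae_eq_freqCut_add f hS, ae_enorm_fourierInv_le (freqCut f hS)]
      with x hsplit hsup hlt
    have hlow_x : ‖(𝓕⁻ (freqCut f hS) : L2Space V) x‖ ≤ t / 2 := by
      rw [← ENNReal.ofReal_le_ofReal_iff (by positivity), ofReal_norm]
      exact hsup.trans hlow
    rw [hsplit] at hlt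
    rw [← ofReal_norm]
    gcongr
    linarith [norm_add_le ((𝓕⁻ (freqCut f hS) : L2Space V) x)
      ((𝓕⁻ (freqCut f hS.compl) : L2Space V) x)]
  calc volume {x | t < ‖(𝓕⁻ f : L2Space V) x‖}
      ≤ volume {x | ENNReal.ofReal (t / 2) ^ 2 ≤
          ‖(𝓕⁻ (freqCut f hS.compl) : L2Space V) x‖ₑ ^ 2} := measure_mono_ae hsub
    _ ≤ (∫⁻ x, ‖(𝓕⁻ (freqCut f hS.compl) : L2Space V) x‖ₑ ^ 2) /
          ENNReal.ofReal (t / 2) ^ 2 :=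
        meas_ge_le_lintegral_div ((Lp.aestronglyMeasurable _).enorm.pow_const 2)
          (by positivity) (by finiteness)
    _ = (∫⁻ ξ in Sᶜ, ‖f ξ‖ₑ ^ 2) / ENNReal.ofReal (t / 2) ^ 2 := by
        rw [lintegral_enorm_fourierInv_sq,
          lintegral_freqCut f hS.compl (F := fun _ z => ‖z‖ₑ ^ 2) (by simp)]

open Module (finrank)

theorem volume_mul_norm_rpow_lt [Nontrivial V] {κ t : ℝ} (hκ : 0 < κ) (ht : 0 < t) :
    volume {ξ : V | κ * ‖ξ‖ ^ ((finrank ℝ V : ℝ) / 2) < t} =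
      ENNReal.ofReal ((t / κ) ^ 2) * volume (Metric.ball (0 : V) 1) := by
  have hd : (0 : ℝ) < finrank ℝ V := by exact_mod_cast Module.finrank_pos
  have hball : {ξ : V | κ * ‖ξ‖ ^ ((finrank ℝ V : ℝ) / 2) < t} =
      Metric.ball 0 ((t / κ) ^ ((finrank ℝ V : ℝ) / 2)⁻¹) := by
    ext ξ
    rw [Set.mem_ofPred_eq, mem_ball_zero_iff, mul_comm, ← lt_div_iff₀ hκ,
      Real.lt_rpow_inv_iff_of_pos (norm_nonneg ξ) (by positivity) (by positivity)]
  rw [hball, Measure.addHaar_ball _ _ (by positivity), ← Real.rpow_mul_natCast (by positivity),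
    inv_div, div_mul_cancel₀ _ hd.ne', Real.rpow_two]

/-- The frequency threshold `T` with `T(ξ)² = 4 |B₁| M |ξ|ᵈ`, where `d = dim V`: the low-pass part
`{T < t}` of a profile of mass `M` has inverse Fourier transform at most `t / 2`. -/
def freqThreshold (M : ℝ) (ξ : V) : ℝ :=
  √(4 * volume.real (Metric.ball (0 : V) 1) * M) * ‖ξ‖ ^ ((finrank ℝ V : ℝ) / 2)

theorem freqThreshold_nonneg (M : ℝ) (ξ : V) : 0 ≤ freqThreshold M ξ := by
  rw [freqThreshold]
  positivity

theorem measurable_freqThreshold (M : ℝ) : Measurable (freqThreshold (V := V) M) := by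
  unfold freqThreshold
  fun_prop

theorem ofReal_freqThreshold_rpow {M σ : ℝ} (hM : 0 ≤ M) (hσ : 0 ≤ σ) (ξ : V) :
    ENNReal.ofReal (freqThreshold M ξ ^ (2 * σ)) =
      ENNReal.ofReal ((4 * volume.real (Metric.ball (0 : V) 1)) ^ σ) * ENNReal.ofReal M ^ σ *
        ‖ξ‖ₑ ^ ((finrank ℝ V : ℝ) * σ) := by
  rw [freqThreshold, Real.mul_rpow (by positivity) (by positivity), Real.sqrt_eq_rpow,
    ← Real.rpow_mul (by positivity), ← Real.rpow_mul (norm_nonneg ξ),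
    show 1 / 2 * (2 * σ) = σ by ring,
    show (finrank ℝ V : ℝ) / 2 * (2 * σ) = finrank ℝ V * σ by ring,
    Real.mul_rpow (by positivity) hM, ENNReal.ofReal_mul (by positivity),
    ENNReal.ofReal_mul (by positivity), ENNReal.ofReal_rpow_of_nonneg hM hσ, ← ofReal_norm,
    ENNReal.ofReal_rpow_of_nonneg (norm_nonneg ξ) (by positivity)]

theorem volume_freqThreshold_lt_mul [Nontrivial V] {M t : ℝ} (hM : 0 ≤ M) (ht : 0 < t) :
    volume {ξ : V | freqThreshold M ξ < t} * ENNReal.ofReal M ≤ ENNReal.ofReal (t / 2) ^ 2 := by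
  rcases hM.eq_or_lt with rfl | hM
  · simp
  have hω : 0 < volume.real (Metric.ball (0 : V) 1) :=
    ENNReal.toReal_pos (Metric.measure_ball_pos _ _ one_pos).ne' measure_ball_lt_top.ne
  have hκ : 0 < √(4 * volume.real (Metric.ball (0 : V) 1) * M) := by positivity
  unfold freqThreshold
  rw [volume_mul_norm_rpow_lt hκ ht, ← ofReal_measureReal (s := Metric.ball (0 : V) 1),
    ← ENNReal.ofReal_mul (by positivity), ← ENNReal.ofReal_mul (by positivity),
    ← ENNReal.ofReal_pow (by positivity), div_pow, Real.sq_sqrt (by positivity)]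
  refine ENNReal.ofReal_le_ofReal (le_of_eq ?_)
  field_simp
  norm_num

theorem volume_lt_norm_fourierInv_le_freqThreshold [Nontrivial V] (f : L2Space V) {t : ℝ}
    (ht : 0 < t) :
    volume {x | t < ‖(𝓕⁻ f : L2Space V) x‖} ≤ ENNReal.ofReal (t ^ (-2 : ℝ)) *
      volume.withDensity (fun ξ => 4 * ‖f ξ‖ₑ ^ 2)
        {ξ | t ≤ freqThreshold (freqMoment 0 f).toReal ξ} := by
  set M := (freqMoment 0 f).toReal
  have hS : MeasurableSet {ξ : V | freqThreshold M ξ < t} :=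
    measurableSet_lt (measurable_freqThreshold M) measurable_const
  have hcompl : {ξ : V | freqThreshold M ξ < t}ᶜ = {ξ | t ≤ freqThreshold M ξ} := by
    ext ξ
    simp
  have hvol :=
    volume_freqThreshold_lt_mul (V := V) (ENNReal.toReal_nonneg (a := freqMoment 0 f)) ht
  rw [ENNReal.ofReal_toReal (freqMoment_zero_ne_top f)] at hvol
  refine (volume_lt_norm_fourierInv_le f hS ht hvol).trans_eq ?_
  have hsq : (ENNReal.ofReal (t / 2) ^ 2)⁻¹ = ENNReal.ofReal (t ^ (-2 : ℝ)) * 4 := by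
    rw [← ENNReal.ofReal_pow (by positivity), ← ENNReal.ofReal_inv_of_pos (by positivity),
      ← ENNReal.ofReal_ofNat 4, ← ENNReal.ofReal_mul (by positivity),
      Real.rpow_neg ht.le, Real.rpow_two]
    congr 1
    field_simp
    norm_num
  rw [hcompl, withDensity_apply _ (hcompl ▸ hS.compl), lintegral_const_mul' _ _ (by simp),
    ENNReal.div_eq_inv_mul, hsq, mul_assoc]

theorem exists_lintegral_fourierInv_rpow_le [Nontrivial V] {σ : ℝ} (hσ : 0 < σ) :
    ∃ C : NNReal, ∀ f : L2Space V,
      ∫⁻ x, ‖(𝓕⁻ f : L2Space V) x‖ₑ ^ (2 * σ + 2) ≤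
        C * (freqMoment 0 f ^ σ * freqMoment ((finrank ℝ V : ℝ) * σ) f) := by
  set B := volume.real (Metric.ball (0 : V) 1)
  set A := ENNReal.ofReal ((2 * σ + 2) / (2 * σ))
  refine ⟨(A * ENNReal.ofReal ((4 * B) ^ σ) * 4).toNNReal, fun f => ?_⟩
  rw [ENNReal.coe_toNNReal (by finiteness)]
  set M := (freqMoment 0 f).toReal
  have hM : 0 ≤ M := ENNReal.toReal_nonneg
  have hMf : ENNReal.ofReal M = freqMoment 0 f := ENNReal.ofReal_toReal (freqMoment_zero_ne_top f)
  have hdens : AEMeasurable (fun ξ => 4 * ‖f ξ‖ₑ ^ 2) (volume : Measure V) :=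
    ((Lp.aestronglyMeasurable f).enorm.pow_const 2).const_mul 4
  calc ∫⁻ x, ‖(𝓕⁻ f : L2Space V) x‖ₑ ^ (2 * σ + 2)
      = ∫⁻ x, ENNReal.ofReal (‖(𝓕⁻ f : L2Space V) x‖ ^ (2 * σ + 2)) := by
        refine lintegral_congr fun x => ?_
        rw [← ofReal_norm, ENNReal.ofReal_rpow_of_nonneg (norm_nonneg _) (by positivity)]
    _ ≤ A * ∫⁻ ξ, ENNReal.ofReal (freqThreshold M ξ ^ (2 * σ))
            ∂volume.withDensity fun ξ => 4 * ‖f ξ‖ₑ ^ 2 :=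
        lintegral_rpow_add_le_of_meas_lt_le (Lp.aestronglyMeasurable _).norm.aemeasurable
          (fun _ => norm_nonneg _) (measurable_freqThreshold M).aemeasurable
          (freqThreshold_nonneg M) (by positivity) zero_le_two
          fun _ ht => volume_lt_norm_fourierInv_le_freqThreshold f ht
    _ = A * ∫⁻ ξ, ENNReal.ofReal ((4 * B) ^ σ) * 4 * freqMoment 0 f ^ σ *
          (‖ξ‖ₑ ^ ((finrank ℝ V : ℝ) * σ) * ‖f ξ‖ₑ ^ 2) := by
        rw [lintegral_withDensity_eq_lintegral_mul_non_measurable₀ _ hdens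
          (ae_of_all _ fun ξ => by finiteness)]
        refine congrArg _ (lintegral_congr fun ξ => ?_)
        rw [Pi.mul_apply, ofReal_freqThreshold_rpow hM hσ.le, hMf]
        ring
    _ = A * ENNReal.ofReal ((4 * B) ^ σ) * 4 *
          (freqMoment 0 f ^ σ * freqMoment ((finrank ℝ V : ℝ) * σ) f) := by
        have hfin : freqMoment 0 f ^ σ ≠ ⊤ :=
          ENNReal.rpow_ne_top_of_nonneg hσ.le (freqMoment_zero_ne_top f)
        rw [lintegral_const_mul' _ _ (by finiteness), ← freqMoment]
        ring

theorem freqMoment_freqCut_le (f : L2Space V) (hS : MeasurableSet S) {s r : ℝ}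
    (h : ∀ ξ ∈ S, ‖ξ‖ₑ ^ s ≤ ‖ξ‖ₑ ^ r) : freqMoment s (freqCut f hS) ≤ freqMoment r f := by
  rw [freqMoment_freqCut]
  refine (setLIntegral_mono' hS fun ξ hξ => ?_).trans (setLIntegral_le_lintegral S _)
  gcongr ?_ * _
  exact h ξ hξ

theorem lintegral_fourierInv_rpow_le_freqCut_add (f : L2Space V) (hS : MeasurableSet S) {p : ℝ}
    (hp : 1 ≤ p) :
    ∫⁻ x, ‖(𝓕⁻ f : L2Space V) x‖ₑ ^ p ≤
      2 ^ (p - 1) * ((∫⁻ x, ‖(𝓕⁻ (freqCut f hS) : L2Space V) x‖ₑ ^ p) +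
        ∫⁻ x, ‖(𝓕⁻ (freqCut f hS.compl) : L2Space V) x‖ₑ ^ p) := by
  rw [← lintegral_add_left' ((Lp.aestronglyMeasurable _).enorm.pow_const _),
    ← lintegral_const_mul' _ _ (ENNReal.rpow_ne_top_of_nonneg (sub_nonneg.2 hp) (by simp))]
  refine lintegral_mono_ae ?_
  filter_upwards [fourierInv_ae_eq_freqCut_add f hS] with x hx
  rw [hx]
  exact (ENNReal.rpow_le_rpow (enorm_add_le _ _) (by positivity)).trans
    (ENNReal.rpow_add_le_mul_rpow_add_rpow _ _ hp)

/-- Split at `‖ξ‖ = 1`: for lower frequencies the top moment, and for higher ones the mass, is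
controlled by the moment of order `a`. -/
theorem exists_lintegral_fourierInv_rpow_le_add [Nontrivial V] {σ a : ℝ} (hσ : 0 < σ)
    (ha : 0 ≤ a) (had : a ≤ finrank ℝ V * σ) :
    ∃ C : NNReal, ∀ f : L2Space V,
      ∫⁻ x, ‖(𝓕⁻ f : L2Space V) x‖ₑ ^ (2 * σ + 2) ≤
        C * (freqMoment 0 f ^ σ * freqMoment a f +
          freqMoment a f ^ σ * freqMoment ((finrank ℝ V : ℝ) * σ) f) := by
  obtain ⟨C, hC⟩ := exists_lintegral_fourierInv_rpow_le (V := V) hσ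
  refine ⟨2 ^ (2 * σ + 2 - 1) * C, fun f => ?_⟩
  have hS : MeasurableSet (Metric.ball (0 : V) 1) := measurableSet_ball
  have hlow : ∀ ξ ∈ Metric.ball (0 : V) 1, ‖ξ‖ₑ ^ ((finrank ℝ V : ℝ) * σ) ≤ ‖ξ‖ₑ ^ a := by
    intro ξ hξ
    refine ENNReal.rpow_le_rpow_of_exponent_ge ?_ had
    rw [← ofReal_norm]
    exact ENNReal.ofReal_le_one.2 (mem_ball_zero_iff.1 hξ).le
  have hhigh : ∀ ξ ∈ (Metric.ball (0 : V) 1)ᶜ, ‖ξ‖ₑ ^ (0 : ℝ) ≤ ‖ξ‖ₑ ^ a := by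
    intro ξ hξ
    refine ENNReal.rpow_le_rpow_of_exponent_le ?_ ha
    rw [← ofReal_norm]
    exact ENNReal.one_le_ofReal.2 (by simpa using hξ)
  calc ∫⁻ x, ‖(𝓕⁻ f : L2Space V) x‖ₑ ^ (2 * σ + 2)
      ≤ 2 ^ (2 * σ + 2 - 1) * ((∫⁻ x, ‖(𝓕⁻ (freqCut f hS) : L2Space V) x‖ₑ ^ (2 * σ + 2)) +
          ∫⁻ x, ‖(𝓕⁻ (freqCut f hS.compl) : L2Space V) x‖ₑ ^ (2 * σ + 2)) :=
        lintegral_fourierInv_rpow_le_freqCut_add f hS (by linarith)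
    _ ≤ 2 ^ (2 * σ + 2 - 1) * (C * (freqMoment 0 f ^ σ * freqMoment a f) +
          C * (freqMoment a f ^ σ * freqMoment ((finrank ℝ V : ℝ) * σ) f)) := by
        gcongr
        · refine (hC _).trans ?_
          gcongr
          · exact freqMoment_freqCut_le f hS fun _ _ => le_rfl
          · exact freqMoment_freqCut_le f hS hlow
        · refine (hC _).trans ?_
          gcongr
          · exact freqMoment_freqCut_le f hS.compl hhigh
          · exact freqMoment_freqCut_le f hS.compl fun _ _ => le_rfl
    _ = _ := by
        rw [← mul_add, ← mul_assoc, ENNReal.coe_mul, ENNReal.coe_rpow_of_nonneg _ (by linarith),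
          ENNReal.coe_ofNat]

section WeakDiv

/-! ### Fourier symbols of weak derivatives -/

open scoped LineDeriv

variable {ι : Type*} [Fintype ι]

/-- `v` is the weak divergence `∑ⱼ ∂ g_j / ∂ m_j` of the field with components `g j` along the
directions `m j`. A single component gives weak directional derivatives. -/
def IsWeakDiv (m : ι → V) (g : ι → V → ℂ) (v : V → ℂ) : Prop :=
  ∀ φ : V → ℂ, ContDiff ℝ (⊤ : ℕ∞) φ → HasCompactSupport φ →
    ∑ j, ∫ x, g j x * fderiv ℝ φ x (m j) = -∫ x, v x * φ x

theorem exists_schwartzMap_hasCompactSupport_apply_zero (V : Type*) [NormedAddCommGroup V]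
    [InnerProductSpace ℝ V] [FiniteDimensional ℝ V] :
    ∃ X : 𝓢(V, ℂ), HasCompactSupport X ∧ X 0 = 1 := by
  let b : ContDiffBump (0 : V) := ⟨1, 2, by norm_num, by norm_num⟩
  have hb : HasCompactSupport (Complex.ofRealCLM ∘ b) := b.hasCompactSupport.comp_left rfl
  have hb' : ContDiff ℝ ∞ (Complex.ofRealCLM ∘ b) := Complex.ofRealCLM.contDiff.comp b.contDiff
  refine ⟨hb.toSchwartzMap hb', hb, ?_⟩
  simpa using b.one_of_mem_closedBall (by simp [b])

variable {g : V → ℂ}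

theorem integrable_mul_dilate_mul (hg : MemLp g 2) (Y ψ : 𝓢(V, ℂ)) (c : ℝ) :
    Integrable fun x => g x * (Y (c • x) * ψ x) := by
  have hY : Continuous fun x => Y (c • x) := by
    have := Y.continuous
    fun_prop
  refine hg.integrable_mul (MemLp.of_le_mul (c := SchwartzMap.seminorm ℝ 0 0 Y) (ψ.memLp 2)
    (hY.mul ψ.continuous).aestronglyMeasurable (ae_of_all _ fun x => ?_))
  rw [norm_mul]
  gcongr
  exact Y.norm_le_seminorm ℝ _

theorem tendsto_integral_mul_dilate_mul (hg : MemLp g 2) (Y ψ : 𝓢(V, ℂ)) :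
    Tendsto (fun c : ℝ => ∫ x, g x * (Y (c • x) * ψ x)) (𝓝 0)
      (𝓝 (∫ x, g x * (Y 0 * ψ x))) := by
  refine tendsto_integral_filter_of_dominated_convergence
    (fun x => ‖g x‖ * (SchwartzMap.seminorm ℝ 0 0 Y * ‖ψ x‖))
    (Eventually.of_forall fun c => (integrable_mul_dilate_mul hg Y ψ c).aestronglyMeasurable)
    (Eventually.of_forall fun c => ae_of_all _ fun x => ?_)
    (hg.norm.integrable_mul ((ψ.memLp 2).norm.const_mul _)) (ae_of_all _ fun x => ?_)
  · rw [norm_mul, norm_mul]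
    gcongr
    exact Y.norm_le_seminorm ℝ _
  · have hY : Continuous fun c : ℝ => Y (c • x) := by
      have := Y.continuous
      fun_prop
    simpa using ((hY.tendsto 0).mul_const (ψ x)).const_mul (g x)

theorem fderiv_dilate_mul {E : Type*} [NormedAddCommGroup E] [NormedSpace ℝ E]
    (X φ : 𝓢(E, ℂ)) (c : ℝ) (x m : E) :
    fderiv ℝ (fun x => X (c • x) * φ x) x m =
      c * ((∂_{m} X) (c • x) * φ x) + X (c • x) * (∂_{m} φ) x := by
  have hX : Differentiable ℝ fun x => X (c • x) := by
    have := X.differentiable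
    fun_prop
  rw [fderiv_fun_mul (hX x) (φ.differentiable x), fderiv_comp_smul]
  simp only [add_apply, smul_apply, smul_eq_mul, SchwartzMap.lineDerivOp_apply_eq_fderiv,
    Complex.real_smul]
  ring

theorem tendsto_integral_mul_fderiv_dilate_mul (hg : MemLp g 2) (X φ : 𝓢(V, ℂ)) (m : V) :
    Tendsto (fun c : ℝ => ∫ x, g x * fderiv ℝ (fun x => X (c • x) * φ x) x m) (𝓝 0)
      (𝓝 (∫ x, g x * (X 0 * (∂_{m} φ) x))) := by
  have hsplit : ∀ c : ℝ, ∫ x, g x * fderiv ℝ (fun x => X (c • x) * φ x) x m =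
      c * (∫ x, g x * ((∂_{m} X) (c • x) * φ x)) + ∫ x, g x * (X (c • x) * (∂_{m} φ) x) := by
    intro c
    rw [← integral_const_mul, ← integral_add ((integrable_mul_dilate_mul hg _ _ c).const_mul _)
      (integrable_mul_dilate_mul hg _ _ c)]
    simp only [fderiv_dilate_mul, mul_add, mul_left_comm]
  simp only [hsplit]
  have hc : Tendsto (fun c : ℝ => (c : ℂ)) (𝓝 0) (𝓝 0) := by
    simpa using Complex.continuous_ofReal.tendsto 0
  simpa using (hc.mul (tendsto_integral_mul_dilate_mul hg (∂_{m} X) φ)).add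
    (tendsto_integral_mul_dilate_mul hg X (∂_{m} φ))

theorem integral_mul_fourier_schwartzMap (hg : MemLp g 2) (ψ : 𝓢(V, ℂ)) :
    ∫ x, g x * 𝓕 ψ x = ∫ ξ, ψ ξ * (𝓕 (hg.toLp g) : L2Space V) ξ := by
  rw [integral_schwartzMap_mul_fourier]
  refine integral_congr_ae ?_
  filter_upwards [hg.coeFn_toLp] with x hx
  rw [hx, mul_comm]

theorem integral_mul_lineDeriv_fourier_schwartzMap (hg : MemLp g 2) (ψ : 𝓢(V, ℂ)) (m : V) :
    ∫ x, g x * (∂_{m} (𝓕 ψ)) x =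
      -∫ ξ, ψ ξ * (2 * Real.pi * Complex.I * (inner ℝ ξ m : ℝ) *
        (𝓕 (hg.toLp g) : L2Space V) ξ) := by
  have hm : (fun ξ : V => inner ℝ ξ m).HasTemperateGrowth := by fun_prop
  rw [SchwartzMap.lineDerivOp_fourier_eq, integral_mul_fourier_schwartzMap hg, ← integral_neg]
  refine integral_congr_ae (ae_of_all _ fun ξ => ?_)
  simp only [smul_apply, SchwartzMap.smulLeftCLM_apply_apply hm, smul_eq_mul, Complex.real_smul]
  ring

variable {m : ι → V} {g : ι → V → ℂ} {v : V → ℂ}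

theorem IsWeakDiv.sum_integral_mul_lineDeriv (h : IsWeakDiv m g v) (hg : ∀ j, MemLp (g j) 2)
    (hv : MemLp v 2) (φ : 𝓢(V, ℂ)) :
    ∑ j, ∫ x, g j x * (∂_{m j} φ) x = -∫ x, v x * φ x := by
  obtain ⟨X, hX, hX0⟩ := exists_schwartzMap_hasCompactSupport_apply_zero V
  have hdiv := tendsto_finsetSum Finset.univ fun j _ =>
    tendsto_integral_mul_fderiv_dilate_mul (hg j) X φ (m j)
  have hval := (tendsto_integral_mul_dilate_mul hv X φ).neg
  simp only [hX0, one_mul] at hdiv hval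
  refine tendsto_nhds_unique (hdiv.mono_left (nhdsWithin_le_nhds (s := {0}ᶜ)))
    ((hval.mono_left nhdsWithin_le_nhds).congr' ?_)
  filter_upwards [self_mem_nhdsWithin] with c hc
  have hsmooth : ContDiff ℝ ∞ fun x => X (c • x) * φ x := by
    have := X.smooth ⊤
    have := φ.smooth ⊤
    fun_prop
  exact (h _ hsmooth (hX.comp_smul hc).mul_right).symm

theorem IsWeakDiv.fourier_ae_eq (h : IsWeakDiv m g v) (hg : ∀ j, MemLp (g j) 2)
    (hv : MemLp v 2) :
    ⇑(𝓕 (hv.toLp v) : L2Space V) =ᵐ[volume] fun ξ =>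
      ∑ j, 2 * Real.pi * Complex.I * (inner ℝ ξ (m j) : ℝ) *
        (𝓕 ((hg j).toLp (g j)) : L2Space V) ξ := by
  have hloc : ∀ j, LocallyIntegrable fun ξ => 2 * Real.pi * Complex.I * (inner ℝ ξ (m j) : ℝ) *
      (𝓕 ((hg j).toLp (g j)) : L2Space V) ξ := fun j =>
    ((Lp.memLp _).locallyIntegrable (by norm_num)).continuous_smul
      (g := fun ξ : V => 2 * Real.pi * Complex.I * (inner ℝ ξ (m j) : ℝ)) (by fun_prop)
  have hint : ∀ (ψ : 𝓢(V, ℂ)) j, Integrable fun ξ => ψ ξ *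
      (2 * Real.pi * Complex.I * (inner ℝ ξ (m j) : ℝ) *
        (𝓕 ((hg j).toLp (g j)) : L2Space V) ξ) := by
    intro ψ j
    have hm : (fun ξ : V => inner ℝ ξ (m j)).HasTemperateGrowth := by fun_prop
    have hψ := (SchwartzMap.smulLeftCLM ℂ (fun ξ : V => inner ℝ ξ (m j)) ψ).memLp 2 (μ := volume)
    refine ((hψ.integrable_mul (Lp.memLp (𝓕 ((hg j).toLp (g j)) : L2Space V))).const_mul
      (2 * Real.pi * Complex.I)).congr (ae_of_all _ fun ξ => ?_)
    simp only [Pi.mul_apply, SchwartzMap.smulLeftCLM_apply_apply hm, Complex.real_smul]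
    ring
  refine ae_eq_of_integral_schwartzMap_mul_eq ((Lp.memLp _).locallyIntegrable (by norm_num))
    (locallyIntegrable_finsetSum _ fun j _ => hloc j) fun ψ => ?_
  have hψ := h.sum_integral_mul_lineDeriv hg hv (𝓕 ψ)
  simp only [fun j => integral_mul_lineDeriv_fourier_schwartzMap (hg j) ψ (m j),
    Finset.sum_neg_distrib, neg_inj, integral_mul_fourier_schwartzMap hv] at hψ
  simp only [Finset.mul_sum]
  rw [integral_finsetSum _ fun j _ => hint ψ j, ← hψ]

end WeakDiv

end Fourier

section Sobolev

/-! ### `H²` in frequency variables -/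

variable {N : ℕ}

theorem TestFun.pderiv {φ : Esp N → ℂ} (hφ : TestFun φ) (i : Fin N) : TestFun (pderivC i φ) :=
  ⟨(hφ.1.fderiv_right (by simp)).clm_apply contDiff_const,
    hφ.2.fderiv_apply (𝕜 := ℝ) (EuclideanSpace.single i 1)⟩

theorem TestFun.memLp {φ : Esp N → ℂ} (hφ : TestFun φ) (p : ℝ≥0∞) : MemLp φ p :=
  hφ.1.continuous.memLp_of_hasCompactSupport hφ.2

theorem integral_mul_lapC {u φ : Esp N → ℂ} (hu : MemLp u 2) (hφ : TestFun φ) :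
    ∫ x, u x * lapC φ x = ∑ i, ∫ x, u x * pderivC i (pderivC i φ) x := by
  have hint : ∀ i, Integrable fun x => u x * pderivC i (pderivC i φ) x := fun i =>
    hu.integrable_mul (((hφ.pderiv i).pderiv i).memLp 2)
  simp only [lapC, Finset.mul_sum]
  exact integral_finsetSum _ fun i _ => hint i

theorem IsWeakPDeriv.isWeakDiv {u v : Esp N → ℂ} {i : Fin N} (h : IsWeakPDeriv u i v) :
    IsWeakDiv (fun _ : Unit => EuclideanSpace.single i (1 : ℝ)) (fun _ => u) v :=
  fun φ hφ hφc => by simpa [pderivC] using h φ ⟨hφ, hφc⟩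

theorem sum_enorm_sq_eq_enorm_sq (ξ : Esp N) : ∑ i, ‖ξ i‖ₑ ^ 2 = ‖ξ‖ₑ ^ 2 := by
  simp only [← ofReal_norm, ← ENNReal.ofReal_pow (norm_nonneg _), EuclideanSpace.norm_sq_eq]
  rw [ENNReal.ofReal_sum_of_nonneg fun i _ => by positivity]

theorem ofReal_integral_norm_sq {f : Esp N → ℂ} (hf : MemLp f 2) :
    ENNReal.ofReal (∫ x, ‖f x‖ ^ 2) = ∫⁻ ξ, ‖(𝓕 (hf.toLp f) : L2Space (Esp N)) ξ‖ₑ ^ 2 := by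
  rw [lintegral_enorm_fourier_sq, ofReal_integral_eq_lintegral_ofReal
    (hf.integrable_norm_pow (by norm_num)) (ae_of_all _ fun x => by positivity)]
  refine lintegral_congr_ae ?_
  filter_upwards [hf.coeFn_toLp] with x hx
  rw [hx, ENNReal.ofReal_pow (norm_nonneg _), ofReal_norm]

theorem one_le_enorm_two_pi_I : 1 ≤ ‖(2 * Real.pi * Complex.I : ℂ)‖ₑ := by
  rw [← ofReal_norm]
  simp only [norm_mul, Complex.norm_ofNat, Complex.norm_real, Complex.norm_I, mul_one,
    Real.norm_of_nonneg Real.pi_pos.le, ENNReal.one_le_ofReal]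
  linarith [Real.pi_gt_three]

/-- The exponent `σ = 4 / N`: the mass-preserving dilations of `ℝᴺ` then scale `∫|u|^{2σ+2}` and
`∫|Δu|²` by the same factor. -/
def IsMassCritical (N : ℕ) (σ : ℝ) : Prop := N * σ = 4

namespace IsMassCritical

variable {σ : ℝ}

theorem pos (h : IsMassCritical N σ) : 0 < σ := by
  have h : N * σ = 4 := h
  exact pos_of_mul_pos_right (by linarith) N.cast_nonneg

theorem dim_ne_zero (h : IsMassCritical N σ) : N ≠ 0 := by
  rintro rfl
  simp [IsMassCritical] at h

theorem nontrivial (h : IsMassCritical N σ) : Nontrivial (Esp N) :=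
  Module.nontrivial_of_finrank_pos (R := ℝ)
    (by rw [finrank_euclideanSpace_fin]; exact Nat.pos_of_ne_zero h.dim_ne_zero)

theorem finrank_mul (h : IsMassCritical N σ) : Module.finrank ℝ (Esp N) * σ = 4 := by
  rwa [finrank_euclideanSpace_fin]

end IsMassCritical

namespace H2

theorem isWeakDiv_grad (U : H2 N) :
    IsWeakDiv (fun i => EuclideanSpace.single i (1 : ℝ)) U.grad U.lapl := by
  intro φ hφ hφc
  have hφ : TestFun φ := ⟨hφ, hφc⟩
  calc ∑ i, ∫ x, U.grad i x * pderivC i φ x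
      = -∑ i, ∫ x, U.u x * pderivC i (pderivC i φ) x := by
        simp only [U.grad_spec _ _ (hφ.pderiv _), Finset.sum_neg_distrib, neg_neg]
    _ = -∫ x, U.lapl x * φ x := by rw [← integral_mul_lapC U.u_mem hφ, U.lapl_spec φ hφ]

/-- The Fourier transform of an `H²` function, as an element of `L²`. -/
def fourier (U : H2 N) : L2Space (Esp N) := 𝓕 (U.u_mem.toLp U.u)

theorem fourierInv_fourier_ae_eq (U : H2 N) :
    ⇑(𝓕⁻ U.fourier : L2Space (Esp N)) =ᵐ[volume] U.u := by
  rw [fourier, FourierTransform.fourierInv_fourier_eq]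
  exact U.u_mem.coeFn_toLp

theorem fourier_grad_ae_eq (U : H2 N) (i : Fin N) :
    ⇑(𝓕 ((U.grad_mem i).toLp (U.grad i)) : L2Space (Esp N)) =ᵐ[volume] fun ξ =>
      2 * Real.pi * Complex.I * (ξ i : ℝ) * U.fourier ξ := by
  simpa [fourier, EuclideanSpace.inner_single_right] using
    (U.grad_spec i).isWeakDiv.fourier_ae_eq (fun _ => U.u_mem) (U.grad_mem i)

theorem fourier_lapl_ae_eq (U : H2 N) :
    ⇑(𝓕 (U.lapl_mem.toLp U.lapl) : L2Space (Esp N)) =ᵐ[volume] fun ξ =>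
      (2 * Real.pi * Complex.I) ^ 2 * (‖ξ‖ ^ 2 : ℝ) * U.fourier ξ := by
  filter_upwards [U.isWeakDiv_grad.fourier_ae_eq U.grad_mem U.lapl_mem,
    ae_all_iff.2 U.fourier_grad_ae_eq] with ξ hdiv hgrad
  rw [hdiv, EuclideanSpace.norm_sq_eq, Complex.ofReal_sum, Finset.mul_sum, Finset.sum_mul]
  refine Finset.sum_congr rfl fun i _ => ?_
  rw [hgrad i, EuclideanSpace.inner_single_right]
  simp only [Real.norm_eq_abs, sq_abs, Complex.ofReal_pow, conj_trivial, one_mul]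
  ring

theorem ofReal_massSq (U : H2 N) : ENNReal.ofReal U.massSq = freqMoment 0 U.fourier := by
  rw [massSq, ofReal_integral_norm_sq U.u_mem, freqMoment_zero, fourier]

theorem ofReal_gradSq (U : H2 N) :
    ENNReal.ofReal U.gradSq =
      ‖2 * Real.pi * Complex.I‖ₑ ^ 2 * freqMoment 2 U.fourier := by
  have : AEMeasurable (fun ξ => ‖U.fourier ξ‖ₑ) (volume : Measure (Esp N)) :=
    (Lp.aestronglyMeasurable U.fourier).enorm
  rw [gradSq, ENNReal.ofReal_sum_of_nonneg fun i _ => integral_nonneg fun x => by positivity]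
  calc ∑ i, ENNReal.ofReal (∫ x, ‖U.grad i x‖ ^ 2)
      = ∑ i, ∫⁻ ξ, ‖2 * Real.pi * Complex.I‖ₑ ^ 2 * (‖ξ i‖ₑ ^ 2 * ‖U.fourier ξ‖ₑ ^ 2) := by
        refine Finset.sum_congr rfl fun i _ => ?_
        rw [ofReal_integral_norm_sq (U.grad_mem i)]
        refine lintegral_congr_ae ?_
        filter_upwards [U.fourier_grad_ae_eq i] with ξ hξ
        rw [hξ, enorm_mul, enorm_mul, mul_pow, mul_pow, mul_assoc,
          enorm_eq_iff_norm_eq.2 (Complex.norm_real (ξ i))]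
    _ = ∫⁻ ξ, ‖2 * Real.pi * Complex.I‖ₑ ^ 2 * (‖ξ‖ₑ ^ (2 : ℝ) * ‖U.fourier ξ‖ₑ ^ 2) := by
        rw [← lintegral_finsetSum' _ fun i _ => by fun_prop]
        simp only [← Finset.mul_sum, ← Finset.sum_mul, sum_enorm_sq_eq_enorm_sq,
          ENNReal.rpow_ofNat]
    _ = ‖2 * Real.pi * Complex.I‖ₑ ^ 2 * freqMoment 2 U.fourier :=
        lintegral_const_mul' _ _ (by finiteness)

theorem ofReal_lapSq (U : H2 N) :
    ENNReal.ofReal U.lapSq =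
      ‖2 * Real.pi * Complex.I‖ₑ ^ 4 * freqMoment 4 U.fourier := by
  rw [lapSq, ofReal_integral_norm_sq U.lapl_mem, freqMoment,
    ← lintegral_const_mul' _ _ (by finiteness)]
  refine lintegral_congr_ae ?_
  filter_upwards [U.fourier_lapl_ae_eq] with ξ hξ
  rw [hξ, enorm_mul, enorm_mul, enorm_eq_iff_norm_eq.2 (Complex.norm_real _), enorm_pow, enorm_pow,
    enorm_norm, ENNReal.rpow_ofNat]
  ring

theorem massSq_nonneg (U : H2 N) : 0 ≤ U.massSq := integral_nonneg fun _ => by positivity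

theorem gradSq_nonneg (U : H2 N) : 0 ≤ U.gradSq :=
  Finset.sum_nonneg fun _ _ => integral_nonneg fun _ => by positivity

theorem lapSq_nonneg (U : H2 N) : 0 ≤ U.lapSq := integral_nonneg fun _ => by positivity

theorem pPow_nonneg (U : H2 N) (σ : ℝ) : 0 ≤ U.pPow σ := integral_nonneg fun _ => by positivity

theorem gradSq_sq_le (U : H2 N) : U.gradSq ^ 2 ≤ U.lapSq * U.massSq := by
  rw [← ENNReal.ofReal_le_ofReal_iff (mul_nonneg U.lapSq_nonneg U.massSq_nonneg),
    ENNReal.ofReal_pow U.gradSq_nonneg, ENNReal.ofReal_mul U.lapSq_nonneg, ofReal_gradSq,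
    ofReal_lapSq, ofReal_massSq, mul_pow, ← pow_mul, mul_assoc (‖_‖ₑ ^ 4)]
  exact mul_le_mul_right (freqMoment_two_sq_le U.fourier) _

theorem freqMoment_two_le (U : H2 N) : freqMoment 2 U.fourier ≤ ENNReal.ofReal U.gradSq := by
  rw [ofReal_gradSq]
  exact le_mul_of_one_le_left' (one_le_pow₀ one_le_enorm_two_pi_I)

theorem freqMoment_four_le (U : H2 N) : freqMoment 4 U.fourier ≤ ENNReal.ofReal U.lapSq := by
  rw [ofReal_lapSq]
  exact le_mul_of_one_le_left' (one_le_pow₀ one_le_enorm_two_pi_I)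

theorem ofReal_pPow_le (U : H2 N) {σ : ℝ} (hσ : 0 < σ) :
    ENNReal.ofReal (U.pPow σ) ≤
      ∫⁻ x, ‖(𝓕⁻ U.fourier : L2Space (Esp N)) x‖ₑ ^ (2 * σ + 2) := by
  have hmeas : AEStronglyMeasurable (fun x => ‖U.u x‖ ^ (2 * σ + 2)) :=
    (U.u_mem.1.norm.aemeasurable.pow_const _).aestronglyMeasurable
  rw [pPow, integral_eq_lintegral_of_nonneg_ae (ae_of_all _ fun x => by positivity) hmeas]
  refine ENNReal.ofReal_toReal_le.trans_eq (lintegral_congr_ae ?_)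
  filter_upwards [U.fourierInv_fourier_ae_eq] with x hx
  rw [hx, ← ENNReal.ofReal_rpow_of_nonneg (norm_nonneg _) (by positivity), ofReal_norm]

theorem exists_pPow_le_mul {σ : ℝ} (hσ : IsMassCritical N σ) :
    ∃ C : ℝ, ∀ U : H2 N, U.pPow σ ≤ C * (U.massSq ^ σ * U.lapSq) := by
  have := hσ.nontrivial
  have hσ0 := hσ.pos.le
  obtain ⟨C, hC⟩ := exists_lintegral_fourierInv_rpow_le (V := Esp N) hσ.pos
  rw [hσ.finrank_mul] at hC
  refine ⟨C, fun U => ?_⟩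
  have hM := U.massSq_nonneg
  have hL := U.lapSq_nonneg
  refine (ENNReal.ofReal_le_ofReal_iff (by positivity)).1 ?_
  calc ENNReal.ofReal (U.pPow σ)
      ≤ C * (freqMoment 0 U.fourier ^ σ * freqMoment 4 U.fourier) :=
        (U.ofReal_pPow_le hσ.pos).trans (hC _)
    _ ≤ C * (ENNReal.ofReal U.massSq ^ σ * ENNReal.ofReal U.lapSq) := by
        gcongr
        · exact U.ofReal_massSq.ge
        · exact U.freqMoment_four_le
    _ = ENNReal.ofReal (C * (U.massSq ^ σ * U.lapSq)) := by
        rw [ENNReal.ofReal_mul C.coe_nonneg, ENNReal.ofReal_mul (by positivity),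
          ENNReal.ofReal_rpow_of_nonneg hM hσ0, ENNReal.ofReal_coe_nnreal]

/-- Each term contains the gradient, so `∫|u|^{2σ+2}` vanishes with `∇u` at fixed mass
and `∫|Δu|²`. -/
theorem exists_pPow_le_add {σ : ℝ} (hσ : IsMassCritical N σ) :
    ∃ C : ℝ, ∀ U : H2 N,
      U.pPow σ ≤ C * (U.massSq ^ σ * U.gradSq + U.gradSq ^ σ * U.lapSq) := by
  have := hσ.nontrivial
  have hσ0 := hσ.pos.le
  obtain ⟨C, hC⟩ := exists_lintegral_fourierInv_rpow_le_add (V := Esp N) hσ.pos (a := 2)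
    (by norm_num) (by rw [hσ.finrank_mul]; norm_num)
  rw [hσ.finrank_mul] at hC
  refine ⟨C, fun U => ?_⟩
  have hM := U.massSq_nonneg
  have hG := U.gradSq_nonneg
  have hL := U.lapSq_nonneg
  refine (ENNReal.ofReal_le_ofReal_iff (by positivity)).1 ?_
  calc ENNReal.ofReal (U.pPow σ)
      ≤ C * (freqMoment 0 U.fourier ^ σ * freqMoment 2 U.fourier +
          freqMoment 2 U.fourier ^ σ * freqMoment 4 U.fourier) :=
        (U.ofReal_pPow_le hσ.pos).trans (hC _)
    _ ≤ C * (ENNReal.ofReal U.massSq ^ σ * ENNReal.ofReal U.gradSq +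
          ENNReal.ofReal U.gradSq ^ σ * ENNReal.ofReal U.lapSq) := by
        gcongr
        · exact U.ofReal_massSq.ge
        · exact U.freqMoment_two_le
        · exact U.freqMoment_two_le
        · exact U.freqMoment_four_le
    _ = ENNReal.ofReal (C * (U.massSq ^ σ * U.gradSq + U.gradSq ^ σ * U.lapSq)) := by
        rw [ENNReal.ofReal_mul C.coe_nonneg, ENNReal.ofReal_add (by positivity) (by positivity),
          ENNReal.ofReal_mul (by positivity), ENNReal.ofReal_mul (by positivity),
          ENNReal.ofReal_rpow_of_nonneg hM hσ0, ENNReal.ofReal_rpow_of_nonneg hG hσ0,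
          ENNReal.ofReal_coe_nnreal]

end H2

/-! ### Mass-preserving dilations -/

theorem TestFun.comp_smul {φ : Esp N → ℂ} (hφ : TestFun φ) {l : ℝ} (hl : l ≠ 0) :
    TestFun fun x => φ (l • x) := by
  have := hφ.1
  exact ⟨by fun_prop, hφ.2.comp_smul hl⟩

theorem pderivC_comp_smul (i : Fin N) (φ : Esp N → ℂ) (l : ℝ) :
    pderivC i (fun x => φ (l • x)) = fun x => l • pderivC i φ (l • x) := by
  funext x
  simp only [pderivC, fderiv_comp_smul, smul_apply]

theorem pderivC_const_smul (i : Fin N) (φ : Esp N → ℂ) (l : ℝ) :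
    pderivC i (fun x => l • φ x) = fun x => l • pderivC i φ x := by
  funext x
  exact DFunLike.congr_fun (congrFun (fderiv_const_smul_field (𝕜 := ℝ) (f := φ) l) x)
    (EuclideanSpace.single i 1)

theorem lapC_comp_smul (φ : Esp N → ℂ) (l : ℝ) :
    lapC (fun x => φ (l • x)) = fun x => l ^ 2 • lapC φ (l • x) := by
  funext x
  simp only [lapC, pderivC_comp_smul, pderivC_const_smul, Finset.smul_sum, smul_smul, sq]

theorem integral_comp_smul_mul (f g : Esp N → ℂ) {l : ℝ} (hl : 0 < l) :
    ∫ x, f (l • x) * g x = (l ^ N)⁻¹ • ∫ y, f y * g (l⁻¹ • y) := by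
  have h := Measure.integral_comp_smul_of_nonneg (volume : Measure (Esp N))
    (fun y => f y * g (l⁻¹ • y)) l (hR := hl.le)
  simpa only [inv_smul_smul₀ hl.ne', finrank_euclideanSpace_fin] using h

theorem IsWeakPDeriv.comp_smul {u v : Esp N → ℂ} {i : Fin N} (h : IsWeakPDeriv u i v) {l : ℝ}
    (hl : 0 < l) : IsWeakPDeriv (fun x => u (l • x)) i (fun x => l * v (l • x)) := by
  intro φ hφ
  have hψ := h _ (hφ.comp_smul (inv_ne_zero hl.ne'))
  simp only [pderivC_comp_smul, mul_smul_comm, integral_smul] at hψ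
  simp only [mul_assoc, integral_const_mul, integral_comp_smul_mul _ _ hl]
  rw [inv_smul_eq_iff₀ hl.ne'] at hψ
  rw [hψ, smul_neg, smul_neg, smul_comm, Complex.real_smul]

theorem IsWeakLap.comp_smul {u v : Esp N → ℂ} (h : IsWeakLap u v) {l : ℝ} (hl : 0 < l) :
    IsWeakLap (fun x => u (l • x)) (fun x => l ^ 2 * v (l • x)) := by
  intro φ hφ
  have hψ := h _ (hφ.comp_smul (inv_ne_zero hl.ne'))
  simp only [lapC_comp_smul, mul_smul_comm, integral_smul, inv_pow] at hψ
  simp only [mul_assoc, integral_const_mul, integral_comp_smul_mul _ _ hl]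
  rw [inv_smul_eq_iff₀ (pow_ne_zero 2 hl.ne')] at hψ
  rw [hψ, smul_comm, Complex.real_smul, Complex.ofReal_pow]

theorem IsWeakPDeriv.const_mul {u v : Esp N → ℂ} {i : Fin N} (h : IsWeakPDeriv u i v) (a : ℂ) :
    IsWeakPDeriv (fun x => a * u x) i (fun x => a * v x) := fun φ hφ => by
  simp only [mul_assoc, integral_const_mul, h φ hφ, mul_neg]

theorem IsWeakLap.const_mul {u v : Esp N → ℂ} (h : IsWeakLap u v) (a : ℂ) :
    IsWeakLap (fun x => a * u x) (fun x => a * v x) := fun φ hφ => by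
  simp only [mul_assoc, integral_const_mul, h φ hφ]

theorem TestFun.isWeakPDeriv {φ : Esp N → ℂ} (hφ : TestFun φ) (i : Fin N) :
    IsWeakPDeriv φ i (pderivC i φ) := fun _ hψ =>
  SchwartzMap.integral_mul_lineDerivOp_right_eq_neg_left (hφ.2.toSchwartzMap hφ.1)
    (hψ.2.toSchwartzMap hψ.1) (EuclideanSpace.single i 1)

theorem TestFun.isWeakLap {φ : Esp N → ℂ} (hφ : TestFun φ) : IsWeakLap φ (lapC φ) := by
  intro ψ hψ
  calc ∫ x, φ x * lapC ψ x
      = ∑ i, ∫ x, φ x * pderivC i (pderivC i ψ) x := integral_mul_lapC (hφ.memLp 2) hψ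
    _ = ∑ i, ∫ x, ψ x * pderivC i (pderivC i φ) x := by
        refine Finset.sum_congr rfl fun i _ => ?_
        rw [hφ.isWeakPDeriv i _ (hψ.pderiv i), hψ.isWeakPDeriv i _ (hφ.pderiv i)]
        simp only [mul_comm]
    _ = ∫ x, lapC φ x * ψ x := by
        rw [← integral_mul_lapC (hψ.memLp 2) hφ]
        simp only [mul_comm]

theorem memLp_comp_smul {E : Type*} [NormedAddCommGroup E] {u : Esp N → E} {p : ℝ≥0∞}
    (hu : MemLp u p) {l : ℝ} (hl : 0 < l) : MemLp (fun x => u (l • x)) p := by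
  have h : MemLp u p (Measure.map (l • ·) (volume : Measure (Esp N))) := by
    rw [Measure.map_addHaar_smul _ hl.ne']
    exact hu.smul_measure ENNReal.ofReal_ne_top
  exact h.comp_of_map (measurable_const_smul l).aemeasurable

/-- `f` scaled in amplitude by `a` and dilated by `l` so that `a = 1` preserves the `L²` norm. -/
def rescaleFun (a l : ℝ) (f : Esp N → ℂ) (x : Esp N) : ℂ :=
  ((a * l ^ ((N : ℝ) / 2) : ℝ) : ℂ) * f (l • x)

theorem integral_norm_rescaleFun_rpow (f : Esp N → ℂ) {a l p : ℝ} (ha : 0 ≤ a) (hl : 0 < l) :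
    ∫ x, ‖rescaleFun a l f x‖ ^ p = a ^ p * l ^ (N * (p / 2 - 1)) * ∫ x, ‖f x‖ ^ p := by
  have hamp : (a * l ^ ((N : ℝ) / 2)) ^ p * (l ^ N)⁻¹ = a ^ p * l ^ (N * (p / 2 - 1)) := by
    rw [Real.mul_rpow ha (by positivity), ← Real.rpow_mul hl.le, ← Real.rpow_natCast,
      ← Real.rpow_neg hl.le, mul_assoc, ← Real.rpow_add hl]
    ring_nf
  have hnorm : ∀ x, ‖rescaleFun a l f x‖ ^ p = (a * l ^ ((N : ℝ) / 2)) ^ p * ‖f (l • x)‖ ^ p := by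
    intro x
    rw [rescaleFun, norm_mul, Complex.norm_real, Real.norm_of_nonneg (by positivity),
      Real.mul_rpow (by positivity) (norm_nonneg _)]
  simp only [hnorm, integral_const_mul]
  rw [Measure.integral_comp_smul_of_nonneg volume (fun x => ‖f x‖ ^ p) l (hR := hl.le),
    finrank_euclideanSpace_fin, smul_eq_mul, ← mul_assoc, hamp]

theorem integral_norm_rescaleFun_sq (f : Esp N → ℂ) {a l : ℝ} (ha : 0 ≤ a) (hl : 0 < l) :
    ∫ x, ‖rescaleFun a l f x‖ ^ 2 = a ^ 2 * ∫ x, ‖f x‖ ^ 2 := by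
  simpa using integral_norm_rescaleFun_rpow f (p := 2) ha hl

namespace H2

/-- `rescaleFun a l` on `H²`, with the chain-rule factors on the derivatives. -/
def rescale (U : H2 N) (a : ℝ) {l : ℝ} (hl : 0 < l) : H2 N where
  u := rescaleFun a l U.u
  grad i x := l * rescaleFun a l (U.grad i) x
  lapl x := l ^ 2 * rescaleFun a l U.lapl x
  u_mem := (memLp_comp_smul U.u_mem hl).const_mul _
  grad_mem i := ((memLp_comp_smul (U.grad_mem i) hl).const_mul _).const_mul _
  lapl_mem := ((memLp_comp_smul U.lapl_mem hl).const_mul _).const_mul _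
  grad_spec i φ hφ := by
    simpa only [rescaleFun, mul_left_comm (l : ℂ)] using
      ((U.grad_spec i).comp_smul hl).const_mul ((a * l ^ ((N : ℝ) / 2) : ℝ) : ℂ) φ hφ
  lapl_spec φ hφ := by
    simpa only [rescaleFun, mul_left_comm ((l : ℂ) ^ 2)] using
      (U.lapl_spec.comp_smul hl).const_mul ((a * l ^ ((N : ℝ) / 2) : ℝ) : ℂ) φ hφ

variable (U : H2 N) {a l : ℝ}

theorem massSq_rescale (ha : 0 ≤ a) (hl : 0 < l) : (U.rescale a hl).massSq = a ^ 2 * U.massSq :=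
  integral_norm_rescaleFun_sq U.u ha hl

theorem gradSq_rescale (ha : 0 ≤ a) (hl : 0 < l) :
    (U.rescale a hl).gradSq = a ^ 2 * l ^ 2 * U.gradSq := by
  simp only [gradSq, rescale, norm_mul, mul_pow, integral_const_mul, Complex.norm_real,
    Real.norm_eq_abs, sq_abs, integral_norm_rescaleFun_sq _ ha hl, Finset.mul_sum]
  refine Finset.sum_congr rfl fun i _ => ?_
  ring

theorem lapSq_rescale (ha : 0 ≤ a) (hl : 0 < l) :
    (U.rescale a hl).lapSq = a ^ 2 * l ^ 4 * U.lapSq := by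
  simp only [lapSq, rescale, norm_mul, mul_pow, norm_pow, integral_const_mul, Complex.norm_real,
    Real.norm_eq_abs, sq_abs, integral_norm_rescaleFun_sq _ ha hl]
  ring

theorem pPow_rescale {σ : ℝ} (ha : 0 ≤ a) (hl : 0 < l) (hσ : IsMassCritical N σ) :
    (U.rescale a hl).pPow σ = a ^ (2 * σ + 2) * l ^ 4 * U.pPow σ := by
  have hdim : (N : ℝ) * σ = 4 := hσ
  have hexp : N * ((2 * σ + 2) / 2 - 1) = (4 : ℕ) := by
    push_cast
    linear_combination hdim
  refine (integral_norm_rescaleFun_rpow U.u ha hl).trans ?_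
  rw [hexp, Real.rpow_natCast, pPow]

theorem energy_rescale_one {σ : ℝ} (hl : 0 < l) (hσ : IsMassCritical N σ) :
    (U.rescale 1 hl).energy σ =
      l ^ 4 * (U.lapSq - U.pPow σ / (σ + 1)) - 2 * l ^ 2 * U.gradSq := by
  rw [energy, lapSq_rescale U zero_le_one hl, gradSq_rescale U zero_le_one hl,
    pPow_rescale U zero_le_one hl hσ, Real.one_rpow]
  ring

/-- A test function with its classical derivatives. -/
def ofTestFun {φ : Esp N → ℂ} (hφ : TestFun φ) : H2 N where
  u := φ
  grad i := pderivC i φ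
  lapl := lapC φ
  u_mem := hφ.memLp 2
  grad_mem i := (hφ.pderiv i).memLp 2
  lapl_mem := memLp_finsetSum _ fun i _ => ((hφ.pderiv i).pderiv i).memLp 2
  grad_spec i := hφ.isWeakPDeriv i
  lapl_spec := hφ.isWeakLap

theorem exists_pPow_pos (N : ℕ) {σ : ℝ} (hσ : 0 < σ) : ∃ U : H2 N, 0 < U.pPow σ := by
  obtain ⟨X, hX, hX0⟩ := exists_schwartzMap_hasCompactSupport_apply_zero (Esp N)
  have hcont : Continuous fun x => ‖X x‖ ^ (2 * σ + 2) :=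
    X.continuous.norm.rpow_const fun x => Or.inr (by positivity)
  refine ⟨ofTestFun ⟨X.smooth ⊤, hX⟩, hcont.integral_pos_of_hasCompactSupport_nonneg_nonzero
    (x := 0) ?_ (fun x => by positivity) (by simp [ofTestFun, hX0])⟩
  exact hX.comp_left (g := fun z : ℂ => ‖z‖ ^ (2 * σ + 2))
    (by rw [norm_zero, Real.zero_rpow (by positivity)])

end H2

/-! ### The mass-critical energy -/

theorem rLp_two {f : Esp N → ℂ} (hf : MemLp f 2) : rLp 2 f = √(∫ x, ‖f x‖ ^ 2) := by
  rw [rLp, ENNReal.ofReal_ofNat, hf.eLpNorm_eq_integral_rpow_norm two_ne_zero ENNReal.ofNat_ne_top,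
    ENNReal.toReal_ofReal (by positivity), Real.sqrt_eq_rpow]
  simp only [ENNReal.toReal_ofNat, Real.rpow_ofNat, one_div]

section MassCritical

variable {σ : ℝ}

namespace H2

theorem massSq_pos_iff_nontriv (U : H2 N) : 0 < U.massSq ↔ U.Nontriv := by
  have hint : Integrable fun x => ‖U.u x‖ ^ 2 := U.u_mem.integrable_norm_pow two_ne_zero
  rw [U.massSq_nonneg.lt_iff_ne', Nontriv, massSq, ne_eq,
    integral_eq_zero_iff_of_nonneg (fun x => by positivity) hint]
  refine not_congr (eventually_congr (Eventually.of_forall fun x => ?_))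
  simp

/-- The mass-critical Gagliardo–Nirenberg quotient, whose supremum is the best constant. -/
def gnQuotient (σ : ℝ) (U : H2 N) : ℝ := U.pPow σ / (U.massSq ^ σ * U.lapSq)

theorem gnQuotient_rescale (hσ : IsMassCritical N σ) (U : H2 N) {a l : ℝ} (ha : 0 < a)
    (hl : 0 < l) : (U.rescale a hl).gnQuotient σ = U.gnQuotient σ := by
  have hamp : a ^ (2 * σ + 2) = (a ^ 2) ^ σ * a ^ 2 := by
    rw [Real.rpow_add ha, Real.rpow_mul ha.le, Real.rpow_two]
  have hscale : (a ^ 2) ^ σ * a ^ 2 * l ^ 4 ≠ 0 := by positivity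
  rw [gnQuotient, pPow_rescale U ha.le hl hσ, massSq_rescale U ha.le hl, lapSq_rescale U ha.le hl,
    Real.mul_rpow (by positivity) U.massSq_nonneg, hamp, gnQuotient,
    ← mul_div_mul_left _ (U.massSq ^ σ * U.lapSq) hscale]
  ring

theorem massSq_pos_and_lapSq_pos (hσ : IsMassCritical N σ) {U : H2 N} (hU : 0 < U.pPow σ) :
    0 < U.massSq ∧ 0 < U.lapSq := by
  obtain ⟨C, hC⟩ := exists_pPow_le_mul hσ
  have hne : U.massSq ^ σ * U.lapSq ≠ 0 := by
    intro h
    exact (hU.trans_le (hC U)).ne' (by rw [h, mul_zero])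
  refine ⟨U.massSq_nonneg.lt_of_ne' fun h => hne ?_,
    U.lapSq_nonneg.lt_of_ne' (right_ne_zero_of_mul hne)⟩
  rw [h, Real.zero_rpow hσ.pos.ne', zero_mul]

theorem exists_massSq_eq_lapSq_eq_one (hσ : IsMassCritical N σ) {U : H2 N} (hU : 0 < U.pPow σ)
    {m : ℝ} (hm : 0 < m) :
    ∃ V : H2 N, V.massSq = m ∧ V.lapSq = 1 ∧ V.gnQuotient σ = U.gnQuotient σ := by
  obtain ⟨hM, hL⟩ := massSq_pos_and_lapSq_pos hσ hU
  obtain ⟨a, ha, ha2⟩ : ∃ a : ℝ, 0 < a ∧ a ^ 2 = m / U.massSq :=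
    ⟨√(m / U.massSq), by positivity, Real.sq_sqrt (by positivity)⟩
  obtain ⟨l, hl, hl4⟩ : ∃ l : ℝ, 0 < l ∧ l ^ 4 = U.massSq / (m * U.lapSq) :=
    ⟨_ ^ ((4 : ℕ) : ℝ)⁻¹, Real.rpow_pos_of_pos (by positivity) _,
      Real.rpow_inv_natCast_pow (by positivity) four_ne_zero⟩
  refine ⟨U.rescale a hl, ?_, ?_, gnQuotient_rescale hσ U ha hl⟩
  · rw [massSq_rescale U ha.le, ha2, div_mul_cancel₀ _ hM.ne']
  · rw [lapSq_rescale U ha.le, hl4, ha2]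
    field_simp

end H2

open H2

theorem GNconst_eq_sSup (hσ : IsMassCritical N σ) :
    GNconst N σ = sSup (gnQuotient σ '' {U : H2 N | U.Nontriv}) := by
  have hdim : (N : ℝ) * σ = 4 := hσ
  refine congrArg sSup (Set.ext fun r => exists_congr fun U => and_congr_right fun _ => ?_)
  have hmass : √U.massSq ^ (2 * σ) = U.massSq ^ σ := by
    rw [Real.rpow_mul (by positivity), Real.rpow_two, Real.sq_sqrt U.massSq_nonneg]
  have hlap : √U.lapSq ^ (2 : ℝ) = U.lapSq := by rw [Real.rpow_two, Real.sq_sqrt U.lapSq_nonneg]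
  rw [rLp_two U.lapl_mem, rLp_two U.u_mem, ← massSq, ← lapSq, hdim,
    show (4 : ℝ) / 2 = 2 by norm_num, show 2 + 2 * σ - 2 = 2 * σ by ring, hmass, hlap, mul_comm]
  exact eq_comm

theorem bddAbove_gnQuotient (hσ : IsMassCritical N σ) :
    BddAbove (gnQuotient σ '' {U : H2 N | U.Nontriv}) := by
  obtain ⟨C, hC⟩ := exists_pPow_le_mul hσ
  refine ⟨max C 0, ?_⟩
  rintro _ ⟨U, -, rfl⟩
  have hM := U.massSq_nonneg
  have hL := U.lapSq_nonneg
  refine div_le_of_le_mul₀ (by positivity) (le_max_right _ _) ((hC U).trans ?_)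
  gcongr
  exact le_max_left _ _

theorem gnQuotient_le_GNconst (hσ : IsMassCritical N σ) {U : H2 N} (hU : 0 < U.pPow σ) :
    U.gnQuotient σ ≤ GNconst N σ := by
  rw [GNconst_eq_sSup hσ]
  exact le_csSup (bddAbove_gnQuotient hσ)
    ⟨U, U.massSq_pos_iff_nontriv.1 (massSq_pos_and_lapSq_pos hσ hU).1, rfl⟩

theorem GNconst_pos (hσ : IsMassCritical N σ) : 0 < GNconst N σ := by
  obtain ⟨U, hU⟩ := exists_pPow_pos N hσ.pos
  obtain ⟨hM, hL⟩ := massSq_pos_and_lapSq_pos hσ hU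
  exact (div_pos hU (by positivity)).trans_le (gnQuotient_le_GNconst hσ hU)

theorem pPow_le_GNconst_mul (hσ : IsMassCritical N σ) (U : H2 N) :
    U.pPow σ ≤ GNconst N σ * (U.massSq ^ σ * U.lapSq) := by
  have hB := GNconst_pos hσ
  have hM := U.massSq_nonneg
  have hL := U.lapSq_nonneg
  rcases (U.pPow_nonneg σ).eq_or_lt with hP | hP
  · rw [← hP]
    positivity
  · obtain ⟨hM, hL⟩ := massSq_pos_and_lapSq_pos hσ hP
    exact (div_le_iff₀ (by positivity)).1 (gnQuotient_le_GNconst hσ hP)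

theorem exists_lt_pPow_of_lt_GNconst (hσ : IsMassCritical N σ) {b m : ℝ} (hb : 0 ≤ b)
    (hbB : b < GNconst N σ) (hm : 0 < m) :
    ∃ U : H2 N, U.massSq = m ∧ U.lapSq = 1 ∧ b * m ^ σ < U.pPow σ := by
  rw [GNconst_eq_sSup hσ] at hbB
  obtain ⟨U₀, hU₀⟩ := exists_pPow_pos N hσ.pos
  have hnontriv : {U : H2 N | U.Nontriv}.Nonempty :=
    ⟨U₀, U₀.massSq_pos_iff_nontriv.1 (massSq_pos_and_lapSq_pos hσ hU₀).1⟩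
  obtain ⟨_, ⟨U, -, rfl⟩, hbU⟩ := exists_lt_of_lt_csSup (hnontriv.image _) hbB
  have hP : 0 < U.pPow σ := (U.pPow_nonneg σ).lt_of_ne' fun h =>
    (hb.trans_lt hbU).ne' (by rw [gnQuotient, h, zero_div])
  obtain ⟨V, hM, hL, hq⟩ := exists_massSq_eq_lapSq_eq_one hσ hP hm
  refine ⟨V, hM, hL, ?_⟩
  rw [← hq, gnQuotient, hM, hL, mul_one] at hbU
  exact (lt_div_iff₀ (by positivity)).1 hbU

theorem kstar_pos (hσ : IsMassCritical N σ) : 0 < kstar N σ := by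
  have hB := GNconst_pos hσ
  have hσ0 := hσ.pos
  unfold kstar
  positivity

theorem kstar_rpow (hσ : IsMassCritical N σ) : kstar N σ ^ σ = (σ + 1) / GNconst N σ := by
  have hB := GNconst_pos hσ
  have hσ0 := hσ.pos
  rw [kstar, Real.mul_rpow (by positivity) (by positivity), ← Real.rpow_mul (by positivity),
    ← Real.rpow_mul hB.le, neg_mul, one_div_mul_cancel hσ0.ne', Real.rpow_one, Real.rpow_neg_one,
    div_eq_mul_inv]

namespace H2

theorem exists_mul_lapSq_sub_le_energy (hσ : IsMassCritical N σ) {k : ℝ} (hk : k < kstar N σ) :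
    ∃ c > 0, ∃ K : ℝ, ∀ U : H2 N, U.massSq ≤ k → c * U.lapSq - K ≤ U.energy σ := by
  wlog hk0 : 0 ≤ k generalizing k
  · obtain ⟨c, hc, K, hK⟩ := this (kstar_pos hσ) le_rfl
    exact ⟨c, hc, K, fun U hU => hK U (hU.trans (not_le.1 hk0).le)⟩
  have hB := GNconst_pos hσ
  have hσ0 := hσ.pos
  have hkσ : GNconst N σ * k ^ σ < σ + 1 := by
    rw [mul_comm, ← lt_div_iff₀ hB, ← kstar_rpow hσ]
    exact Real.rpow_lt_rpow hk0 hk hσ0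
  set δ := 1 - GNconst N σ * k ^ σ / (σ + 1) with hδ_def
  have hδ : 0 < δ := sub_pos.2 ((div_lt_one (by positivity)).2 hkσ)
  refine ⟨δ / 2, by positivity, 2 * k / δ, fun U hU => ?_⟩
  have hM := U.massSq_nonneg
  have hL := U.lapSq_nonneg
  have hpot : 1 / (σ + 1) * U.pPow σ ≤ (1 - δ) * U.lapSq := by
    calc 1 / (σ + 1) * U.pPow σ
        ≤ 1 / (σ + 1) * (GNconst N σ * (k ^ σ * U.lapSq)) := by
          gcongr
          refine (pPow_le_GNconst_mul hσ U).trans ?_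
          gcongr
      _ = (1 - δ) * U.lapSq := by rw [hδ_def]; ring
  have hgrad : 2 * U.gradSq ≤ δ / 2 * U.lapSq + 2 * k / δ := by
    refine two_mul_le_add_of_sq_le_mul (by positivity) (by positivity) ?_
    calc U.gradSq ^ 2 ≤ U.lapSq * k := U.gradSq_sq_le.trans (by gcongr)
      _ = δ / 2 * U.lapSq * (2 * k / δ) := by field_simp
  rw [energy]
  linarith

theorem exists_forall_le_gradSq (hσ : IsMassCritical N σ) (m : ℝ) {p : ℝ} (hp : 0 < p) :
    ∃ g > 0, ∀ U : H2 N, U.massSq = m → U.lapSq = 1 → p ≤ U.pPow σ → g ≤ U.gradSq := by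
  obtain ⟨C, hC⟩ := exists_pPow_le_add hσ
  have hcont : Continuous fun G : ℝ => C * (m ^ σ * G + G ^ σ) := by
    have := hσ.pos.le
    fun_prop (disch := assumption)
  have hzero : Tendsto (fun G : ℝ => C * (m ^ σ * G + G ^ σ)) (𝓝 0) (𝓝 0) := by
    simpa [Real.zero_rpow hσ.pos.ne'] using hcont.tendsto 0
  obtain ⟨g, hg, hsmall⟩ := Metric.eventually_nhds_iff.1 (hzero.eventually_lt_const hp)
  refine ⟨g, hg, fun U hM hL hP => not_lt.1 fun hG => ?_⟩
  have hlt := hsmall (y := U.gradSq) (by rwa [Real.dist_0_eq_abs, abs_of_nonneg U.gradSq_nonneg])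
  have hle := hC U
  rw [hM, hL, mul_one] at hle
  linarith

theorem exists_energy_le_neg_div (hσ : IsMassCritical N σ) {U : H2 N} {ε g : ℝ} (hε : 0 < ε)
    (hg : 0 < g) (hU : U.lapSq - U.pPow σ / (σ + 1) ≤ ε) (hG : g ≤ U.gradSq) :
    ∃ V : H2 N, V.massSq = U.massSq ∧ V.energy σ ≤ -(g ^ 2 / ε) := by
  obtain ⟨l, hl, hl2⟩ : ∃ l : ℝ, 0 < l ∧ l ^ 2 = g / ε :=
    ⟨√(g / ε), by positivity, Real.sq_sqrt (by positivity)⟩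
  refine ⟨U.rescale 1 hl, by rw [massSq_rescale U zero_le_one, one_pow, one_mul], ?_⟩
  calc (U.rescale 1 hl).energy σ
      = (g / ε) ^ 2 * (U.lapSq - U.pPow σ / (σ + 1)) - 2 * (g / ε) * U.gradSq := by
        rw [energy_rescale_one U hl hσ, ← hl2, ← pow_mul]
    _ ≤ (g / ε) ^ 2 * ε - 2 * (g / ε) * g := by gcongr
    _ = -(g ^ 2 / ε) := by field_simp; ring

theorem exists_energy_lt (hσ : IsMassCritical N σ) {m : ℝ} (hm : kstar N σ ≤ m) (R : ℝ) :
    ∃ U : H2 N, U.massSq = m ∧ U.energy σ < R := by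
  have hσ0 := hσ.pos
  have hB := GNconst_pos hσ
  have hm0 : 0 < m := (kstar_pos hσ).trans_le hm
  have hmσ : σ + 1 ≤ GNconst N σ * m ^ σ := by
    rw [← div_le_iff₀' hB, ← kstar_rpow hσ]
    exact Real.rpow_le_rpow (kstar_pos hσ).le hm hσ0.le
  obtain ⟨g, hg, hgrad⟩ := exists_forall_le_gradSq hσ m (p := (σ + 1) / 2) (by positivity)
  -- `ε` is small enough that `-g² / ε < R`.
  set ε := min (1 / 2) (g ^ 2 / (|R| + 1))
  have hε : 0 < ε := by positivity
  have hεhalf : ε ≤ 1 / 2 := min_le_left _ _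
  obtain ⟨U, hM, hL, hP⟩ := exists_lt_pPow_of_lt_GNconst hσ (b := (1 - ε) * GNconst N σ)
    (mul_nonneg (by linarith) hB.le) (mul_lt_of_lt_one_left hB (by linarith)) hm0
  have hPσ : (1 - ε) * (σ + 1) ≤ U.pPow σ := by
    rw [mul_assoc] at hP
    exact (mul_le_mul_of_nonneg_left hmσ (by linarith)).trans hP.le
  have hhalf : (σ + 1) / 2 ≤ (1 - ε) * (σ + 1) := by nlinarith
  have hG : g ≤ U.gradSq := hgrad U hM hL (hhalf.trans hPσ)
  have hdef : U.lapSq - U.pPow σ / (σ + 1) ≤ ε := by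
    have := (le_div_iff₀ (by positivity)).2 hPσ
    linarith
  obtain ⟨V, hV, hE⟩ := exists_energy_le_neg_div hσ hε hg hdef hG
  refine ⟨V, hV.trans hM, hE.trans_lt ?_⟩
  have hR : |R| + 1 ≤ g ^ 2 / ε := (le_div_comm₀ hε (by positivity)).1 (min_le_right _ _)
  linarith [neg_abs_le R]

theorem h2NormSq_le (U : H2 N) : U.h2NormSq ≤ 3 / 2 * (U.massSq + U.lapSq) := by
  have := two_mul_le_add_of_sq_le_mul U.lapSq_nonneg U.massSq_nonneg U.gradSq_sq_le
  rw [h2NormSq]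
  linarith

end H2

theorem bot_lt_EminE (hσ : IsMassCritical N σ) {m : ℝ} (hm : m < kstar N σ) :
    ⊥ < EminE N σ m := by
  obtain ⟨c, hc, K, hK⟩ := exists_mul_lapSq_sub_le_energy hσ hm
  refine (EReal.bot_lt_coe (-K)).trans_le (le_iInf₂ fun U hU => EReal.coe_le_coe_iff.2 ?_)
  have := mul_nonneg hc.le U.lapSq_nonneg
  linarith [hK U hU.le]

theorem EminE_lt_top (hσ : IsMassCritical N σ) {m : ℝ} (hm : 0 < m) : EminE N σ m < ⊤ := by
  obtain ⟨U, hU, -⟩ := exists_lt_pPow_of_lt_GNconst hσ le_rfl (GNconst_pos hσ) hm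
  exact (iInf₂_le U hU).trans_lt (EReal.coe_lt_top _)

theorem EminE_eq_bot (hσ : IsMassCritical N σ) {m : ℝ} (hm : kstar N σ ≤ m) :
    EminE N σ m = ⊥ := by
  refine (EReal.eq_bot_iff_forall_lt _).2 fun R => ?_
  obtain ⟨U, hU, hR⟩ := exists_energy_lt hσ hm R
  exact (iInf₂_le U hU).trans_lt (EReal.coe_lt_coe_iff.2 hR)

theorem exists_h2NormSq_le (hσ : IsMassCritical N σ) {k : ℝ} (hk : k < kstar N σ) (E : ℝ) :
    ∃ C : ℝ, ∀ U : H2 N, U.massSq ≤ k → U.energy σ ≤ E → U.h2NormSq ≤ C := by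
  obtain ⟨c, hc, K, hK⟩ := exists_mul_lapSq_sub_le_energy hσ hk
  refine ⟨3 / 2 * (k + (E + K) / c), fun U hM hE => U.h2NormSq_le.trans ?_⟩
  gcongr
  rw [le_div_iff₀' hc]
  linarith [hK U hM]

end MassCritical

end Sobolev

/-- In the mass-critical case `σ = 4/N`, with
`k* = (σ+1)^{1/σ} B(N,σ)^{-1/σ}`: `E_min(m)` is finite on `(0, k*)`, `E_min(m) = -∞` for
`m ≥ k*`, and sublevel sets of the energy with mass `≤ k₁ < k*` are bounded in `H²`. -/
theorem stmt7 (N : ℕ) (σ : ℝ) (hN : 1 ≤ N) (hσ : σ = 4 / (N : ℝ)) :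
    (∀ m : ℝ, 0 < m → m < kstar N σ → ⊥ < EminE N σ m ∧ EminE N σ m < ⊤) ∧
    (∀ m : ℝ, kstar N σ ≤ m → EminE N σ m = ⊥) ∧
    (∀ k₁ k₂ : ℝ, k₁ < kstar N σ → 0 < k₂ → ∃ C : ℝ, ∀ U : H2 N,
      U.massSq ≤ k₁ → U.energy σ ≤ k₂ → U.h2NormSq ≤ C) := by
  have hcrit : IsMassCritical N σ := by
    rw [IsMassCritical, hσ, mul_div_cancel₀]
    exact_mod_cast Nat.one_le_iff_ne_zero.1 hN
  exact ⟨fun m hm hmk => ⟨bot_lt_EminE hcrit hmk, EminE_lt_top hcrit hm⟩,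
    fun m hm => EminE_eq_bot hcrit hm,
    fun k₁ k₂ hk₁ _ => exists_h2NormSq_le hcrit hk₁ k₂⟩

end
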